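/- arXiv:1006.0788 — 5 statements merged into one kernel-verified Lean document; each statement's English description precedes it below -/
import Mathlib

section
/- (Theorem 6.9, mirror symmetry in dimension d > 3.) Let d > 3, let G be a finite simple graph with |E| = d|V| − (d+1 choose 2), let s ∈ O(d) be a reflection (an orthogonal involution of ℝ^d whose fixed subspace is a hyperplane, of dimension d − 1), S = {I, s}, and let Φ : S → Aut(G) be a homomorphism with j_s > b_s/(d−2) + d(d−3)/(2(d−2)), where j_s is the number of vertices fixed by Φ(s) and b_s the number of edges fixed setwise by Φ(s). Let (G,p) be an S-symmetric framework of type Φ in ℝ^d whose points p_i affinely span ℝ^d and which admits no nonzero fully (S,Φ)-symmetric self-stress (this last hypothesis playing the role of the paper's '(S,Φ)-generic' assumption, as licensed by Remark 6.2). Then (G,p) has a finite flex preserving the symmetry throughout the path. -/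
open scoped Classical

noncomputable section

abbrev Euc (d : ℕ) : Type := EuclideanSpace ℝ (Fin d)

/-- The subspace of points of `ℝ^d` fixed by a linear isometry (orthogonal transformation). -/
def fixedSpace {d : ℕ} (x : Euc d ≃ₗᵢ[ℝ] Euc d) : Submodule ℝ (Euc d) :=
  LinearMap.ker (x.toLinearEquiv.toLinearMap - LinearMap.id)


open Filter Topology in
theorem aux_ift {X Y : Type*} [NormedAddCommGroup X] [NormedSpace ℝ X] [FiniteDimensional ℝ X]
    [NormedAddCommGroup Y] [NormedSpace ℝ Y] [FiniteDimensional ℝ Y]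
    (B : X →ₗ[ℝ] X →ₗ[ℝ] Y) (hB : ∀ x y, B x y = B y x) (p : X)
    (hsurj : Function.Surjective (B p)) (v : X) (hv : B p v = 0) :
    ∃ γ : ℝ → X, γ 0 = p ∧ HasDerivAt γ v 0 ∧
      ∀ᶠ t in 𝓝 (0:ℝ), ContinuousAt γ t ∧ B (γ t) (γ t) = B p p := by
  have : CompleteSpace X := FiniteDimensional.complete ℝ X
  let B' : X →L[ℝ] X →L[ℝ] Y := LinearMap.toContinuousLinearMap
    ((LinearMap.toContinuousLinearMap : (X →ₗ[ℝ] Y) ≃ₗ[ℝ] (X →L[ℝ] Y)).toLinearMap ∘ₗ B)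
  have hB' : ∀ x y, B' x y = B x y := fun x y => rfl
  let f : X → Y := fun x => B' x x
  have hf0 := B'.hasStrictFDerivAt_of_bilinear (hasStrictFDerivAt_id p) (hasStrictFDerivAt_id p)
  set f' : X →L[ℝ] Y := (B'.precompR X (id p) (ContinuousLinearMap.id ℝ X) +
    B'.precompL X (ContinuousLinearMap.id ℝ X) (id p)) with hf'def
  have hf : HasStrictFDerivAt f f' p := hf0
  have hf'a : ∀ w, f' w = (2:ℝ) • B p w := by
    intro w
    have h : f' w = B p w + B w p := rfl
    rw [h, hB w p, two_smul]
  have hr : f'.range = ⊤ := by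
    rw [LinearMap.range_eq_top]
    intro y
    obtain ⟨w, hw⟩ := hsurj ((2:ℝ)⁻¹ • y)
    refine ⟨w, ?_⟩
    change f' w = y
    rw [hf'a, hw, smul_smul]; norm_num
  have hvk : v ∈ f'.ker := by
    change f' v = 0
    rw [hf'a, hv, smul_zero]
  let v' : f'.ker := ⟨v, hvk⟩
  let H := hf.implicitToOpenPartialHomeomorph f f' hr
  let γ : ℝ → X := fun t => hf.implicitFunction f f' hr (f p) (t • v')
  have hcont : Continuous (fun t : ℝ => ((f p, t • v') : Y × f'.ker)) := by fun_prop
  have h0 : (fun t : ℝ => ((f p, t • v') : Y × f'.ker)) 0 = (f p, 0) := by simp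
  have ht : Tendsto (fun t : ℝ => ((f p, t • v') : Y × f'.ker)) (𝓝 0) (𝓝 (f p, 0)) := by
    rw [← h0]; exact hcont.tendsto 0
  refine ⟨γ, ?_, ?_, ?_⟩
  · simp only [γ, zero_smul]
    exact hf.implicitFunction_apply_image hr
  · have h1 := (hf.to_implicitFunction hr).hasFDerivAt
    have h2 : HasDerivAt (fun t : ℝ => t • v') v' 0 := by
      simpa using (hasDerivAt_id (0:ℝ)).smul_const v'
    have h1' : HasFDerivAt (hf.implicitFunction f f' hr (f p)) f'.ker.subtypeL ((0:ℝ) • v') := by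
      rw [zero_smul]; exact h1
    exact h1'.comp_hasDerivAt (0:ℝ) h2
  · have e1 := ht.eventually (hf.map_implicitFunction_eq hr)
    have e2 := ht.eventually (H.open_target.mem_nhds
      (hf.mem_implicitToOpenPartialHomeomorph_target hr))
    filter_upwards [e1, e2] with t h1 h2
    refine ⟨?_, h1⟩
    have h3 : ContinuousAt H.symm (f p, t • v') := H.continuousAt_symm h2
    exact ContinuousAt.comp (f := fun t : ℝ => ((f p, t • v') : Y × f'.ker)) h3 hcont.continuousAt

theorem aux_trace {M : Type*} [AddCommGroup M] [Module ℝ M] [FiniteDimensional ℝ M]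
    (f : M →ₗ[ℝ] M) (hf : ∀ x, f (f x) = x) (U : Submodule ℝ M) (hU : ∀ x, x ∈ U ↔ f x = x) :
    2 * (Module.finrank ℝ U : ℝ) = Module.finrank ℝ M + LinearMap.trace ℝ M f := by
  have hp : LinearMap.IsProj U ((2:ℝ)⁻¹ • (LinearMap.id + f)) := by
    constructor
    · intro x
      rw [hU]
      simp [hf, add_comm]
    · intro x hx
      rw [hU] at hx
      simp only [LinearMap.smul_apply, LinearMap.add_apply, LinearMap.id_apply, hx]
      rw [← two_smul ℝ x, smul_smul]; norm_num
  have := hp.trace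
  rw [map_smul, map_add, LinearMap.trace_id, smul_eq_mul] at this
  linarith

def InvSub {ι W : Type*} [AddCommGroup W] [Module ℝ W] (τ : ι → ι) (C : W →ₗ[ℝ] W) :
    Submodule ℝ (ι → W) where
  carrier := {q | ∀ i, C (q i) = q (τ i)}
  add_mem' := by
    intro a b ha hb i
    simp [ha i, hb i]
  zero_mem' := by intro i; simp
  smul_mem' := by
    intro c a ha i
    simp [ha i]

theorem mem_InvSub {ι W : Type*} [AddCommGroup W] [Module ℝ W] (τ : ι → ι) (C : W →ₗ[ℝ] W)
    (q : ι → W) : q ∈ InvSub τ C ↔ ∀ i, C (q i) = q (τ i) := Iff.rfl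

theorem aux_dim {ι W : Type*} [Fintype ι] [AddCommGroup W] [Module ℝ W] [FiniteDimensional ℝ W]
    (τ : ι → ι) [DecidablePred fun i => τ i = i] (hτ : ∀ i, τ (τ i) = i) (C : W →ₗ[ℝ] W) (hC : ∀ w, C (C w) = w) :
    2 * (Module.finrank ℝ (InvSub τ C) : ℝ) = Fintype.card ι * Module.finrank ℝ W +
      (Finset.univ.filter (fun i => τ i = i)).card * LinearMap.trace ℝ W C := by
  let θ : (ι → W) →ₗ[ℝ] (ι → W) := 
    { toFun := fun q i => C (q (τ i))
      map_add' := by intro a b; ext i; simp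
      map_smul' := by intro c a; ext i; simp }
  have hθ : ∀ q i, θ q i = C (q (τ i)) := fun _ _ => rfl
  rw [aux_trace θ (by intro x; ext i; simp [hθ, hC, hτ]) (InvSub τ C) ?_]
  · rw [Module.finrank_pi_fintype]
    simp only [Finset.sum_const, Finset.card_univ, smul_eq_mul, Nat.cast_mul]
    congr 1
    let b := Module.finBasis ℝ W
    rw [LinearMap.trace_eq_matrix_trace ℝ (Pi.basis (fun _ : ι => b)) θ,
      LinearMap.trace_eq_matrix_trace ℝ b C]
    simp only [Matrix.trace, Matrix.diag, LinearMap.toMatrix_apply, Fintype.sum_sigma]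
    simp only [Pi.basis_repr, Pi.basis_apply, hθ]
    rw [Finset.card_filter, Nat.cast_sum, Finset.sum_mul]
    refine Finset.sum_congr rfl fun i _ => ?_
    by_cases h : τ i = i
    · simp [h]
    · simp [h]
  · intro x
    rw [mem_InvSub]
    constructor
    · intro h; ext1 i; rw [hθ, h, hτ]
    · intro h i
      have := congrFun h (τ i)
      rw [hθ, hτ] at this
      exact this

def RigSub {d : ℕ} (C : Euc d ≃ₗᵢ[ℝ] Euc d) : Submodule ℝ ((Euc d →ₗ[ℝ] Euc d) × Euc d) where
  carrier := {a | (∀ x y, inner ℝ (a.1 x) y = - inner ℝ x (a.1 y)) ∧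
    (∀ x, a.1 (C x) = C (a.1 x)) ∧ C a.2 = a.2}
  add_mem' := by
    rintro a b ⟨h1, h2, h3⟩ ⟨k1, k2, k3⟩
    refine ⟨fun x y => ?_, fun x => ?_, ?_⟩
    · simp [inner_add_left, inner_add_right, h1, k1]; ring
    · simp [h2, k2]
    · simp [h3, k3]
  zero_mem' := by
    refine ⟨fun x y => ?_, fun x => ?_, ?_⟩ <;> simp
  smul_mem' := by
    rintro c a ⟨h1, h2, h3⟩
    refine ⟨fun x y => ?_, fun x => ?_, ?_⟩
    · simp [inner_smul_left, inner_smul_right, h1]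
    · simp [h2]
    · simp [h3]

theorem mem_fixedSpace {d : ℕ} (C : Euc d ≃ₗᵢ[ℝ] Euc d) (x : Euc d) :
    x ∈ fixedSpace C ↔ C x = x := by
  simp [fixedSpace, sub_eq_zero]

theorem rig_dim {d : ℕ} (hd : 0 < d) (C : Euc d ≃ₗᵢ[ℝ] Euc d) (hC2 : ∀ v, C (C v) = v)
    (hrefl : Module.finrank ℝ (fixedSpace C) = d - 1) :
    2 * Module.finrank ℝ (RigSub C) ≤ d * (d - 1) := by
  set n := Module.finrank ℝ (fixedSpace C) with hn
  let e := stdOrthonormalBasis ℝ (fixedSpace C)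
  let Ψ : ((Euc d →ₗ[ℝ] Euc d) × Euc d) →ₗ[ℝ] (((i : Fin n) → (Fin i → ℝ)) × (Fin n → ℝ)) :=
    { toFun := fun a => (fun i k => inner ℝ (e ⟨k, k.2.trans i.2⟩ : Euc d) (a.1 (e i)),
        fun i => inner ℝ (e i : Euc d) a.2)
      map_add' := by
        intro a b; ext <;> simp [inner_add_right]
      map_smul' := by
        intro c a; ext <;> simp [inner_smul_right] }
  have hz : ∀ x ∈ fixedSpace C, (∀ i, inner ℝ (e i : Euc d) x = 0) → x = 0 := by
    intro x hx h
    have : (⟨x, hx⟩ : fixedSpace C) = 0 := by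
      apply e.repr.injective
      ext i
      rw [e.repr_apply_apply]
      simpa using h i
    exact congrArg Subtype.val this
  have hinj : Function.Injective (Ψ.domRestrict (RigSub C)) := by
    rw [injective_iff_map_eq_zero]
    rintro ⟨⟨A, b⟩, h1, h2, h3⟩ h
    simp only at h1 h2 h3
    have hA : ∀ (i : Fin n) (k : Fin i),
        inner ℝ (e ⟨k, k.2.trans i.2⟩ : Euc d) (A (e i)) = 0 := fun i k =>
      congrFun (congrFun (congrArg Prod.fst h) i) k
    have hb : ∀ i : Fin n, inner ℝ (e i : Euc d) b = 0 := fun i => congrFun (congrArg Prod.snd h) i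
    have hb0 : b = 0 := hz b ((mem_fixedSpace C b).2 h3) hb
    have hlt : ∀ i j : Fin n, j < i → inner ℝ (e j : Euc d) (A (e i)) = 0 := fun i j hij =>
      hA i ⟨j, hij⟩
    have hself : ∀ x, inner ℝ x (A x) = 0 := by
      intro x
      have := h1 x x
      rw [real_inner_comm] at this
      linarith
    have hall : ∀ i j : Fin n, inner ℝ (e j : Euc d) (A (e i)) = 0 := by
      intro i j
      rcases lt_trichotomy j i with h | h | h
      · exact hlt i j h
      · rw [h]; exact hself _
      · have h5 := h1 (e j) (e i)
        rw [real_inner_comm, hlt j i h] at h5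
        linarith
    have hAe : ∀ i, A (e i) = 0 := by
      intro i
      apply hz _ _ (hall i)
      rw [mem_fixedSpace, ← h2, (mem_fixedSpace C _).1 (e i).2]
    have hAf : ∀ x ∈ fixedSpace C, A x = 0 := by
      intro x hx
      have : A ∘ₗ (fixedSpace C).subtype = 0 := by
        apply e.toBasis.ext
        intro i
        simpa using hAe i
      exact LinearMap.congr_fun this ⟨x, hx⟩
    have hperp : Module.finrank ℝ (fixedSpace C)ᗮ = 1 := by
      have h6 := (fixedSpace C).finrank_add_finrank_orthogonal
      rw [finrank_euclideanSpace, Fintype.card_fin] at h6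
      omega
    obtain ⟨u, hu, hspan⟩ := finrank_eq_one_iff'.1 hperp
    have hAu : A (u : Euc d) = 0 := by
      have hm : A (u : Euc d) ∈ (fixedSpace C)ᗮ := by
        rw [Submodule.mem_orthogonal]
        intro x hx
        have h7 := h1 x u
        rw [hAf x hx, inner_zero_left] at h7
        linarith
      obtain ⟨c, hc⟩ := hspan ⟨_, hm⟩
      have hc' : c • (u : Euc d) = A u := congrArg Subtype.val hc
      have h8 := hself (u : Euc d)
      rw [← hc', inner_smul_right] at h8
      have hu0 : (u : Euc d) ≠ 0 := fun h => hu (Subtype.ext h)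
      have : c = 0 := by
        rcases mul_eq_zero.1 h8 with h | h
        · exact h
        · exact absurd (inner_self_eq_zero.1 h) hu0
      rw [← hc', this, zero_smul]
    have hA0 : A = 0 := by
      ext1 x
      obtain ⟨y, hy, z, hz, rfl⟩ := (fixedSpace C).exists_add_mem_mem_orthogonal x
      obtain ⟨c, hc⟩ := hspan ⟨z, hz⟩
      have hc' : c • (u : Euc d) = z := congrArg Subtype.val hc
      rw [map_add, hAf y hy, ← hc', map_smul, hAu]
      simp
    subst hb0
    subst hA0
    rfl
  have hle := LinearMap.finrank_le_finrank_of_injective hinj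
  rw [Module.finrank_prod, Module.finrank_pi_fintype] at hle
  simp only [Module.finrank_fintype_fun_eq_card, Fintype.card_fin] at hle
  rw [Fin.sum_univ_eq_sum_range (fun i => i) n] at hle
  have hs := Finset.sum_range_id_mul_two n
  obtain ⟨m, rfl⟩ : ∃ m, d = m + 1 := ⟨d - 1, by omega⟩
  have hnm : n = m := by omega
  rw [hnm] at hle hs
  simp only [Nat.add_sub_cancel]
  have : m * (m - 1) + 2 * m = (m + 1) * m := by
    cases m with
    | zero => rfl
    | succ k => simp only [Nat.add_sub_cancel]; ring
  omega

theorem rig_extract {d : ℕ} {V : Type*} [Fintype V] (C : Euc d ≃ₗᵢ[ℝ] Euc d) (σ : V → V)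
    (p : V → Euc d) (hsym : ∀ i, C (p i) = p (σ i))
    (hspan : affineSpan ℝ (Set.range p) = ⊤) (v : V → Euc d) (hv : ∀ i, C (v i) = v (σ i))
    (h : ∀ k l, inner ℝ (p k - p l) (v k - v l) = 0) :
    ∃ a ∈ RigSub C, ∀ i, v i = a.1 (p i) + a.2 := by
  have hne : Nonempty V := by
    by_contra hne
    rw [not_nonempty_iff] at hne
    rw [Set.range_eq_empty, AffineSubspace.span_empty] at hspan
    exact AffineSubspace.bot_ne_top ℝ (Euc d) (Euc d) hspan
  obtain ⟨o⟩ := hne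
  let x : V → Euc d := fun i => p i - p o
  let y : V → Euc d := fun i => v i - v o
  have hx : Submodule.span ℝ (Set.range x) = ⊤ := by
    have h1 := AffineSubspace.vectorSpan_eq_top_of_affineSpan_eq_top ℝ (Euc d) (Euc d) hspan
    rw [vectorSpan_range_eq_span_range_vsub_right ℝ p o] at h1
    exact h1
  have hxy : ∀ i j, inner ℝ (x i) (y j) = - inner ℝ (x j) (y i) := by
    intro i j
    have h1 := h i j
    have h2 := h i o
    have h3 := h j o
    have e1 : p i - p j = x i - x j := by simp [x]
    have e2 : v i - v j = y i - y j := by simp [y]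
    rw [e1, e2] at h1
    change inner ℝ (x i) (y i) = 0 at h2
    change inner ℝ (x j) (y j) = 0 at h3
    simp only [inner_sub_left, inner_sub_right] at h1
    linarith
  have hzero : ∀ z, (∀ i, inner ℝ (x i) z = 0) → z = 0 := by
    intro z hz
    have : ∀ w ∈ Submodule.span ℝ (Set.range x), inner ℝ w z = 0 := by
      intro w hw
      induction hw using Submodule.span_induction with
      | mem w hw => obtain ⟨i, rfl⟩ := hw; exact hz i
      | zero => simp
      | add a b _ _ ha hb => rw [inner_add_left, ha, hb, add_zero]
      | smul c a _ ha => rw [inner_smul_left, ha, mul_zero]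
    exact inner_self_eq_zero.1 (this z (by rw [hx]; trivial))
  let L : (V → ℝ) →ₗ[ℝ] Euc d := Fintype.linearCombination ℝ x
  let M : (V → ℝ) →ₗ[ℝ] Euc d := Fintype.linearCombination ℝ y
  have hL : LinearMap.range L = ⊤ := by
    rw [Fintype.range_linearCombination, hx]
  have hker : ∀ c, L c = 0 → M c = 0 := by
    intro c hc
    apply hzero
    intro j
    simp only [L, M, Fintype.linearCombination_apply] at hc ⊢
    have : inner ℝ (∑ i, c i • x i) (y j) = 0 := by rw [hc, inner_zero_left]
    rw [sum_inner] at this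
    rw [inner_sum]
    rw [← neg_eq_zero, ← this, ← Finset.sum_neg_distrib]
    refine Finset.sum_congr rfl fun i _ => ?_
    rw [inner_smul_left, inner_smul_right, hxy j i]
    simp
  obtain ⟨r, hr⟩ := L.exists_rightInverse_of_surjective hL
  let A : Euc d →ₗ[ℝ] Euc d := M ∘ₗ r
  have hA : ∀ i, A (x i) = y i := by
    intro i
    have h1 : L (r (x i) - Pi.single i 1) = 0 := by
      rw [map_sub]
      have := LinearMap.congr_fun hr (x i)
      simp only [LinearMap.comp_apply, LinearMap.id_apply] at this
      rw [this]
      simp [L]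
    have h2 := hker _ h1
    rw [map_sub, sub_eq_zero] at h2
    change M (r (x i)) = y i
    rw [h2]
    simp [M]
  have hskew1 : ∀ i z, inner ℝ (A z) (x i) = - inner ℝ z (A (x i)) := by
    intro i z
    have hz : z ∈ Submodule.span ℝ (Set.range x) := by rw [hx]; trivial
    induction hz using Submodule.span_induction with
    | mem w hw =>
      obtain ⟨j, rfl⟩ := hw
      rw [hA, hA, real_inner_comm, hxy]
    | zero => simp
    | add a b _ _ ha hb => rw [map_add, inner_add_left, inner_add_left, ha, hb]; ring
    | smul c a _ ha => rw [map_smul, inner_smul_left, inner_smul_left, ha]; ring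
  have hskew : ∀ z w, inner ℝ (A z) w = - inner ℝ z (A w) := by
    intro z w
    have hw : w ∈ Submodule.span ℝ (Set.range x) := by rw [hx]; trivial
    induction hw using Submodule.span_induction with
    | mem w hw =>
      obtain ⟨j, rfl⟩ := hw
      exact hskew1 j z
    | zero => simp
    | add a b _ _ ha hb => rw [map_add, inner_add_right, inner_add_right, ha, hb]; ring
    | smul c a _ ha => rw [map_smul, inner_smul_right, inner_smul_right, ha]; ring
  have hCx : ∀ i, C (x i) = x (σ i) - x (σ o) := by
    intro i; simp [x, hsym]
  have hCy : ∀ i, C (y i) = y (σ i) - y (σ o) := by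
    intro i; simp [y, hv]
  have hcomm : ∀ z, A (C z) = C (A z) := by
    intro z
    have hz : z ∈ Submodule.span ℝ (Set.range x) := by rw [hx]; trivial
    induction hz using Submodule.span_induction with
    | mem w hw =>
      obtain ⟨j, rfl⟩ := hw
      rw [hCx, map_sub, hA, hA, hA, hCy]
    | zero => simp
    | add a b _ _ ha hb => simp [ha, hb]
    | smul c a _ ha => simp [ha]
  have hrep : ∀ i, v i = A (p i) + (v o - A (p o)) := by
    intro i
    have h1 := hA i
    simp only [x, y, map_sub] at h1
    rw [add_sub, add_comm, ← add_sub, h1]; simp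
  refine ⟨(A, v o - A (p o)), ⟨hskew, hcomm, ?_⟩, hrep⟩
  change C (v o - A (p o)) = v o - A (p o)
  rw [map_sub, ← hcomm, hv, hsym, hrep (σ o)]
  simp

def edgeForm {d : ℕ} {V : Type*} (q w : V → Euc d) : Sym2 V → ℝ :=
  Sym2.lift ⟨fun i j => inner ℝ (q i - q j) (w i - w j), by
    intro i j
    beta_reduce
    rw [← neg_sub (q j), ← neg_sub (w j), inner_neg_neg]⟩

theorem edgeForm_mk {d : ℕ} {V : Type*} (q w : V → Euc d) (i j : V) :
    edgeForm q w s(i, j) = inner ℝ (q i - q j) (w i - w j) := rfl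

def edgeMap {V : Type*} (G : SimpleGraph V) (σ : Equiv.Perm V)
    (hσadj : ∀ i j : V, G.Adj (σ i) (σ j) ↔ G.Adj i j) (e : G.edgeSet) : G.edgeSet :=
  ⟨Sym2.map σ e, by
    obtain ⟨e, he⟩ := e
    induction e with
    | _ i j => simpa [hσadj] using he⟩

def edgeBil {d : ℕ} {V : Type*} (G : SimpleGraph V) (σ : Equiv.Perm V)
    (hσadj : ∀ i j : V, G.Adj (σ i) (σ j) ↔ G.Adj i j) (C : Euc d ≃ₗᵢ[ℝ] Euc d) :
    InvSub σ C.toLinearEquiv.toLinearMap →ₗ[ℝ] InvSub σ C.toLinearEquiv.toLinearMap →ₗ[ℝ]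
      InvSub (edgeMap G σ hσadj) (LinearMap.id : ℝ →ₗ[ℝ] ℝ) :=
  LinearMap.mk₂ ℝ (fun q w => ⟨fun e => edgeForm q.1 w.1 e, by
      rintro ⟨e, he⟩
      induction e with
      | _ i j =>
        have hq : ∀ i, C (q.1 i) = q.1 (σ i) := q.2
        have hw : ∀ i, C (w.1 i) = w.1 (σ i) := w.2
        simp only [LinearMap.id_apply, edgeMap, Sym2.map_mk, edgeForm_mk]
        rw [← hq, ← hq, ← hw, ← hw, ← map_sub, ← map_sub, C.inner_map_map]⟩)
    (by
      intro a b c; ext ⟨e, he⟩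
      induction e with
      | _ i j => simp [edgeForm_mk, inner_sub_left, inner_add_left]; ring)
    (by
      intro a b c; ext ⟨e, he⟩
      induction e with
      | _ i j => simp [edgeForm_mk, inner_sub_left, inner_smul_left]; ring)
    (by
      intro a b c; ext ⟨e, he⟩
      induction e with
      | _ i j => simp [edgeForm_mk, inner_sub_right, inner_add_right]; ring)
    (by
      intro a b c; ext ⟨e, he⟩
      induction e with
      | _ i j => simp [edgeForm_mk, inner_sub_right, inner_smul_right]; ring)

theorem edgeBil_apply {d : ℕ} {V : Type*} (G : SimpleGraph V) (σ : Equiv.Perm V)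
    (hσadj : ∀ i j : V, G.Adj (σ i) (σ j) ↔ G.Adj i j) (C : Euc d ≃ₗᵢ[ℝ] Euc d)
    (q w : InvSub σ C.toLinearEquiv.toLinearMap) (i j : V) (h : G.Adj i j) :
    (edgeBil G σ hσadj C q w).1 ⟨s(i, j), h⟩ = inner ℝ (q.1 i - q.1 j) (w.1 i - w.1 j) := rfl

def stressMap {d : ℕ} {V : Type*} [Fintype V] (G : SimpleGraph V) (p : V → Euc d) :
    (G.edgeSet → ℝ) →ₗ[ℝ] (V → Euc d) where
  toFun ω i := ∑ j, (if h : G.Adj i j then ω ⟨s(i, j), h⟩ else 0) • (p i - p j)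
  map_add' := by
    intro a b; ext1 i
    simp only [Pi.add_apply, ← Finset.sum_add_distrib, ← add_smul]
    refine Finset.sum_congr rfl fun j _ => ?_
    congr 1
    split_ifs <;> simp
  map_smul' := by
    intro c a; ext1 i
    simp only [Pi.smul_apply, Finset.smul_sum, smul_smul, RingHom.id_apply]
    refine Finset.sum_congr rfl fun j _ => ?_
    congr 1
    split_ifs <;> simp

theorem stress_surj {d : ℕ} {V : Type*} [Fintype V]
    (G : SimpleGraph V) (σ : Equiv.Perm V) (hσ2 : ∀ i, σ (σ i) = i)
    (hσadj : ∀ i j : V, G.Adj (σ i) (σ j) ↔ G.Adj i j) (C : Euc d ≃ₗᵢ[ℝ] Euc d)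
    (p : InvSub σ C.toLinearEquiv.toLinearMap)
    (hno : ∀ ω ∈ InvSub (edgeMap G σ hσadj) (LinearMap.id : ℝ →ₗ[ℝ] ℝ),
      stressMap G p.1 ω = 0 → ω = 0) :
    Function.Surjective (edgeBil G σ hσadj C p) := by
  have hp : ∀ i, C (p.1 i) = p.1 (σ i) := p.2
  have hmem : ∀ ω : InvSub (edgeMap G σ hσadj) (LinearMap.id : ℝ →ₗ[ℝ] ℝ),
      stressMap G p.1 ω.1 ∈ InvSub σ C.toLinearEquiv.toLinearMap := by
    intro ω i
    have hω : ∀ e, ω.1 e = ω.1 (edgeMap G σ hσadj e) := ω.2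
    change C (∑ j, _) = ∑ j, _
    rw [map_sum]
    rw [← Equiv.sum_comp σ (fun j => (if h : G.Adj (σ i) j then ω.1 ⟨s(σ i, j), h⟩ else 0) •
      (p.1 (σ i) - p.1 j))]
    refine Finset.sum_congr rfl fun j _ => ?_
    rw [map_smul, map_sub, hp, hp]
    congr 1
    by_cases h : G.Adj i j
    · have h' := (hσadj i j).2 h
      rw [dif_pos h, dif_pos h', hω]
      rfl
    · rw [dif_neg h, dif_neg (fun h' => h ((hσadj i j).1 h'))]
  let S : InvSub (edgeMap G σ hσadj) (LinearMap.id : ℝ →ₗ[ℝ] ℝ) →ₗ[ℝ]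
      InvSub σ C.toLinearEquiv.toLinearMap :=
    LinearMap.codRestrict _ ((stressMap G p.1).domRestrict _) hmem
  let T := (edgeBil G σ hσadj C p) ∘ₗ S
  have hinj : Function.Injective T := by
    rw [injective_iff_map_eq_zero]
    intro ω h
    apply Subtype.ext
    apply hno ω.1 ω.2
    set s := stressMap G p.1 ω.1 with hs
    have h0 : ∀ i j (hij : G.Adj i j), inner ℝ (p.1 i - p.1 j) (s i - s j) = 0 := by
      intro i j hij
      have := edgeBil_apply G σ hσadj C p (S ω) i j hij
      rw [← LinearMap.comp_apply, h] at this
      exact this.symm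
    let c : V → V → ℝ := fun i j => if h : G.Adj i j then ω.1 ⟨s(i, j), h⟩ else 0
    have hc : ∀ i j, c i j = c j i := by
      intro i j
      by_cases h : G.Adj i j
      · simp only [c, dif_pos h, dif_pos h.symm]
        exact congrArg ω.1 (Subtype.ext (Sym2.eq_swap (a := i) (b := j)))
      · simp only [c, dif_neg h, dif_neg (fun h' : G.Adj j i => h h'.symm)]
    have hsi : ∀ i, s i = ∑ j, c i j • (p.1 i - p.1 j) := fun i => rfl
    have e1 : ∑ i, inner ℝ (s i) (s i) = ∑ i, ∑ j, c i j * inner ℝ (p.1 i - p.1 j) (s i) := by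
      refine Finset.sum_congr rfl fun i _ => ?_
      nth_rewrite 1 [hsi i]
      rw [sum_inner]
      refine Finset.sum_congr rfl fun j _ => ?_
      rw [real_inner_smul_left]
    have e2 : ∑ i, inner ℝ (s i) (s i) = - ∑ i, ∑ j, c i j * inner ℝ (p.1 i - p.1 j) (s j) := by
      rw [e1, Finset.sum_comm, ← Finset.sum_neg_distrib]
      refine Finset.sum_congr rfl fun i _ => ?_
      rw [← Finset.sum_neg_distrib]
      refine Finset.sum_congr rfl fun j _ => ?_
      rw [hc j i, ← neg_sub (p.1 i), inner_neg_left]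
      ring
    have e3 : ∑ i, ∑ j, c i j * inner ℝ (p.1 i - p.1 j) (s i - s j) = 0 := by
      refine Finset.sum_eq_zero fun i _ => Finset.sum_eq_zero fun j _ => ?_
      by_cases h : G.Adj i j
      · rw [h0 i j h, mul_zero]
      · simp only [c, dif_neg h, zero_mul]
    simp only [inner_sub_right, mul_sub, Finset.sum_sub_distrib] at e3
    have e4 : ∑ i, inner ℝ (s i) (s i) = 0 := by linarith
    rw [Finset.sum_eq_zero_iff_of_nonneg (fun i _ => real_inner_self_nonneg)] at e4
    ext1 i
    exact inner_self_eq_zero.1 (e4 i (Finset.mem_univ i))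
  have hsurj : Function.Surjective T := LinearMap.surjective_of_injective hinj
  intro y
  obtain ⟨z, hz⟩ := hsurj y
  exact ⟨S z, hz⟩

/-- Theorem 6.9, mirror symmetry in dimension `d > 3`:
`s ∈ O(d)` a reflection (orthogonal involution whose fixed subspace is a
hyperplane), `S = {I, s}`, `Φ(s) = σ` with
`j_s > b_s/(d-2) + d(d-3)/(2(d-2))`, and `|E| = d|V| - (d+1 choose 2)`;
then a symmetric framework spanning `ℝ^d` with no nonzero fully symmetric
self-stress has a symmetry-preserving finite flex. -/
theorem stmt_10 {d : ℕ} (hd : 3 < d) {V : Type*} [Fintype V] [DecidableEq V]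
    (G : SimpleGraph V) [DecidableRel G.Adj]
    (hcount : G.edgeFinset.card + (d + 1).choose 2 = d * Fintype.card V)
    (C : Euc d ≃ₗᵢ[ℝ] Euc d) (hC2 : ∀ v, C (C v) = v)
    (hrefl : Module.finrank ℝ (fixedSpace C) = d - 1)
    (σ : Equiv.Perm V) (hσ2 : σ * σ = 1)
    (hσadj : ∀ i j : V, G.Adj (σ i) (σ j) ↔ G.Adj i j)
    (hjb : (((Finset.univ.filter (fun i : V => σ i = i)).card : ℝ)) >
      ((G.edgeFinset.filter (fun e => Sym2.map σ e = e)).card : ℝ) / ((d : ℝ) - 2)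
        + (d : ℝ) * ((d : ℝ) - 3) / (2 * ((d : ℝ) - 2)))
    (p : V → Euc d) (hp : Function.Injective p)
    (hsym : ∀ i, C (p i) = p (σ i))
    (hspan : affineSpan ℝ (Set.range p) = ⊤)
    (hnostress : ∀ ω : Sym2 V → ℝ,
      (∀ i : V, ∑ j ∈ G.neighborFinset i, ω s(i, j) • (p i - p j) = 0) →
      (∀ e ∈ G.edgeSet, ω (Sym2.map σ e) = ω e) →
      ∀ e ∈ G.edgeSet, ω e = 0) :
    ∃ P : ℝ → V → Euc d,
      ContinuousOn P (Set.Icc 0 1) ∧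
      P 0 = p ∧
      (∀ t ∈ Set.Icc (0:ℝ) 1, ∀ i j : V, G.Adj i j → ‖P t i - P t j‖ = ‖p i - p j‖) ∧
      (∃ k l : V, ∀ t ∈ Set.Ioc (0:ℝ) 1, ‖P t k - P t l‖ ≠ ‖p k - p l‖) ∧
      (∀ t ∈ Set.Icc (0:ℝ) 1, ∀ i, C (P t i) = P t (σ i)) := by
  have hσσ : ∀ i, σ (σ i) = i := fun i => by
    have := Equiv.congr_fun hσ2 i
    simpa using this
  let U := InvSub σ C.toLinearEquiv.toLinearMap
  let F := InvSub (edgeMap G σ hσadj) (LinearMap.id : ℝ →ₗ[ℝ] ℝ)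
  let B : U →ₗ[ℝ] U →ₗ[ℝ] F := edgeBil G σ hσadj C
  let p' : U := ⟨p, hsym⟩
  have hemap : ∀ e, edgeMap G σ hσadj (edgeMap G σ hσadj e) = e := by
    rintro ⟨e, he⟩
    apply Subtype.ext
    induction e with
    | _ i j => simp [edgeMap, hσσ]
  -- surjectivity
  have hsurj : Function.Surjective (B p') := by
    apply stress_surj G σ hσσ hσadj C p'
    intro ω hω h
    let ω' : Sym2 V → ℝ := fun e => if h : e ∈ G.edgeSet then ω ⟨e, h⟩ else 0
    have h1 := hnostress ω' (by
      intro i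
      have h2 := congrFun h i
      simp only [stressMap, LinearMap.coe_mk, AddHom.coe_mk, Pi.zero_apply] at h2
      rw [← h2, ← Finset.sum_subset (Finset.subset_univ (G.neighborFinset i))]
      · refine Finset.sum_congr rfl fun j hj => ?_
        rw [SimpleGraph.mem_neighborFinset] at hj
        simp only [ω', SimpleGraph.mem_edgeSet, dif_pos hj]
        rfl
      · intro j _ hj
        rw [SimpleGraph.mem_neighborFinset] at hj
        rw [dif_neg hj, zero_smul]) (by
      intro e he
      have h3 := (edgeMap G σ hσadj ⟨e, he⟩).2
      have h4 : ω ⟨e, he⟩ = ω (edgeMap G σ hσadj ⟨e, he⟩) := hω ⟨e, he⟩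
      have h5 : Sym2.map σ e ∈ G.edgeSet := h3
      simp only [ω', dif_pos he, dif_pos h5]
      rw [h4]
      rfl)
    ext ⟨e, he⟩
    have := h1 e he
    simp only [ω', dif_pos he] at this
    exact this
  -- dimension counts
  have dC := aux_trace C.toLinearEquiv.toLinearMap hC2 (fixedSpace C) (mem_fixedSpace C)
  have dU := aux_dim σ hσσ C.toLinearEquiv.toLinearMap hC2
  have dF := aux_dim (edgeMap G σ hσadj) hemap (LinearMap.id : ℝ →ₗ[ℝ] ℝ) (fun _ => rfl)
  have dK := LinearMap.finrank_range_add_finrank_ker (B p')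
  rw [LinearMap.range_eq_top.2 hsurj, finrank_top] at dK
  have dW := rig_dim (by omega) C hC2 hrefl
  have hE : Fintype.card G.edgeSet = G.edgeFinset.card := by
    rw [SimpleGraph.edgeFinset, Set.toFinset_card]
  have hb : (Finset.univ.filter (fun e => edgeMap G σ hσadj e = e)).card =
      (G.edgeFinset.filter (fun e => Sym2.map σ e = e)).card := by
    refine Finset.card_bij (fun e _ => e.1) ?_ ?_ ?_
    · intro e he
      simp only [Finset.mem_filter, Finset.mem_univ, true_and, SimpleGraph.mem_edgeFinset] at he ⊢
      exact ⟨e.2, congrArg Subtype.val he⟩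
    · intro a _ b _ h
      exact Subtype.ext h
    · intro e he
      simp only [Finset.mem_filter, Finset.mem_univ, true_and, SimpleGraph.mem_edgeFinset] at he ⊢
      exact ⟨⟨e, he.1⟩, Subtype.ext he.2, rfl⟩
  have hK : d * (d - 1) < 2 * Module.finrank ℝ (LinearMap.ker (B p')) := by
    rw [hrefl, finrank_euclideanSpace, Fintype.card_fin] at dC
    rw [finrank_euclideanSpace, Fintype.card_fin] at dU
    rw [LinearMap.trace_id, Module.finrank_self, hb] at dF
    have hd' : (3:ℝ) < d := by exact_mod_cast hd
    have hch : (((d + 1).choose 2 : ℕ) : ℝ) = (d + 1) * d / 2 := by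
      rw [Nat.cast_choose_two]; push_cast; ring
    have hc' : (G.edgeFinset.card : ℝ) + (d + 1) * d / 2 = d * Fintype.card V := by
      rw [← hch]; exact_mod_cast hcount
    have hdK : (Module.finrank ℝ F : ℝ) + Module.finrank ℝ (LinearMap.ker (B p')) =
      Module.finrank ℝ U := by exact_mod_cast dK
    have hd1 : ((d - 1 : ℕ) : ℝ) = d - 1 := by
      rw [Nat.cast_sub (by omega)]; simp
    rw [hd1] at dC
    have hEc : (Fintype.card G.edgeSet : ℝ) = G.edgeFinset.card := by exact_mod_cast hE
    rw [hEc] at dF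
    have htr : LinearMap.trace ℝ (Euc d) C.toLinearEquiv.toLinearMap = d - 2 := by linarith
    rw [htr] at dU
    have hj : (G.edgeFinset.filter (fun e => Sym2.map σ e = e)).card + (d : ℝ) * (d - 3) / 2 <
        (Finset.univ.filter (fun i : V => σ i = i)).card * ((d:ℝ) - 2) := by
      have hpos : (0:ℝ) < d - 2 := by linarith
      have := mul_lt_mul_of_pos_right hjb hpos
      have h2 : ((d:ℝ) - 2) ≠ 0 := hpos.ne'
      rw [add_mul, div_mul_cancel₀ _ h2] at this
      have h3 : (d : ℝ) * (d - 3) / (2 * (d - 2)) * (d - 2) = (d : ℝ) * (d - 3) / 2 := by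
        field_simp
      rw [h3] at this
      exact this
    have : ((d * (d - 1) : ℕ) : ℝ) < ((2 * Module.finrank ℝ (LinearMap.ker (B p')) : ℕ) : ℝ) := by
      push_cast
      rw [hd1]
      change 2 * (Module.finrank ℝ F : ℝ) = _ at dF
      change 2 * (Module.finrank ℝ U : ℝ) = _ at dU
      simp only [Nat.cast_one, mul_one] at dF
      linarith
    exact_mod_cast this
  -- a nontrivial infinitesimal flex
  obtain ⟨v, hv, k, l, hkl⟩ : ∃ v : U, B p' v = 0 ∧ ∃ k l,
      inner ℝ (p k - p l) (v.1 k - v.1 l) ≠ 0 := by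
    by_contra! hcon
    let R : ((Euc d →ₗ[ℝ] Euc d) × Euc d) →ₗ[ℝ] (V → Euc d) :=
      { toFun := fun a i => a.1 (p i) + a.2
        map_add' := by intro a b; ext1 i; simp; abel
        map_smul' := by intro c a; ext1 i; simp }
    have hle : (LinearMap.ker (B p')).map U.subtype ≤ (RigSub C).map R := by
      rintro _ ⟨v, hv, rfl⟩
      obtain ⟨a, ha, hav⟩ := rig_extract C σ p hsym hspan v.1 v.2 (hcon v hv)
      refine ⟨a, ha, ?_⟩
      ext1 i
      exact (hav i).symm
    have h1 := Submodule.finrank_mono hle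
    have h2 := Submodule.finrank_map_le R (RigSub C)
    rw [Submodule.finrank_map_subtype_eq] at h1
    omega
  obtain ⟨γ, hγ0, hγd, hγ⟩ := aux_ift B (by
    intro x y
    ext ⟨e, he⟩
    induction e with
    | _ i j =>
      exact real_inner_comm (y.1 i - y.1 j) (x.1 i - x.1 j)) p' hsurj v hv
  have hder : HasDerivAt (fun t => ‖(γ t).1 k - (γ t).1 l‖ ^ 2)
      (2 * inner ℝ (p k - p l) (v.1 k - v.1 l)) 0 := by
    have h1 : HasDerivAt (fun t => (γ t).1) v.1 0 := U.subtypeL.hasFDerivAt.comp_hasDerivAt 0 hγd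
    have h2 := hasDerivAt_pi.1 h1
    have h3 := ((h2 k).sub (h2 l)).norm_sq
    simp only [Pi.sub_apply, hγ0] at h3
    exact h3
  have hne := hder.eventually_ne (c := ‖p k - p l‖ ^ 2) (mul_ne_zero two_ne_zero hkl)
  rw [eventually_nhdsWithin_iff] at hne
  obtain ⟨ε, hε, hball⟩ := Metric.eventually_nhds_iff.1 (hγ.and hne)
  have hdist : ∀ t ∈ Set.Icc (0:ℝ) 1, dist (ε / 2 * t) 0 < ε := by
    intro t ht
    rw [Real.dist_eq, sub_zero, abs_of_nonneg (by have := ht.1; positivity)]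
    nlinarith [ht.2]
  refine ⟨fun t => (γ (ε / 2 * t)).1, ?_, ?_, ?_, ⟨k, l, ?_⟩, ?_⟩
  · intro t ht
    apply ContinuousAt.continuousWithinAt
    have h1 := (hball (hdist t ht)).1.1
    exact continuous_subtype_val.continuousAt.comp
      (ContinuousAt.comp (f := fun t : ℝ => ε / 2 * t) h1 (by fun_prop))
  · simp only [mul_zero, hγ0]
    rfl
  · intro t ht i j hij
    have h1 := (hball (hdist t ht)).1.2
    have h2 := congrFun (congrArg Subtype.val h1) ⟨s(i, j), hij⟩
    change inner ℝ ((γ (ε / 2 * t)).1 i - (γ (ε / 2 * t)).1 j)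
      ((γ (ε / 2 * t)).1 i - (γ (ε / 2 * t)).1 j) = inner ℝ (p i - p j) (p i - p j) at h2
    rw [real_inner_self_eq_norm_sq, real_inner_self_eq_norm_sq] at h2
    exact (sq_eq_sq₀ (norm_nonneg _) (norm_nonneg _)).1 h2
  · intro t ht h
    have h1 := (hball (hdist t ⟨ht.1.le, ht.2⟩)).2
      (by have := ht.1; simp only [Set.mem_compl_iff, Set.mem_singleton_iff]; positivity)
    apply h1
    simp only at h
    rw [h]
  · intro t ht i
    exact (γ (ε / 2 * t)).2 i
end
end

section
/- (Lemma 7.1, orbit summation identity for an edge with endpoints in distinct vertex orbits.) Let S be a finite subgroup of O(d), Φ : S → Aut(G) a homomorphism, and (G,p) an S-symmetric framework of type Φ in ℝ^d. Let a, b ∈ V lie in distinct vertex orbits, let x ∈ S, and suppose e = {a, Φ(x)(b)} ∈ E. Set α = |{y ∈ S : Φ(y)(a) = a and Φ(y)(Φ(x)(b)) = Φ(x)(b)}| and let S(e) = {Φ(z)(e) : z ∈ S} be the edge orbit of e. Then Σ_{j ∈ V with {a,j} ∈ S(e)} (p_a − p_j) = (1/α) Σ_{y ∈ S with Φ(y)(a)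 = a} y(p_a − x(p_b)). -/
open scoped Classical

noncomputable section

/-- Lemma 7.1, orbit summation identity for an edge with
endpoints in distinct vertex orbits. -/
theorem stmt_13 {d : ℕ} {V : Type*} [Fintype V] [DecidableEq V]
    (G : SimpleGraph V)
    (S : Subgroup (Euc d ≃ₗᵢ[ℝ] Euc d)) [Fintype S]
    (Φ : S →* Equiv.Perm V)
    (hΦadj : ∀ (x : S) (i j : V), G.Adj (Φ x i) (Φ x j) ↔ G.Adj i j)
    (p : V → Euc d) (hp : Function.Injective p)
    (hsym : ∀ (x : S) (i : V), (x : Euc d ≃ₗᵢ[ℝ] Euc d) (p i) = p (Φ x i))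
    (a b : V) (hdist : ∀ z : S, Φ z a ≠ b)
    (x : S) (he : s(a, Φ x b) ∈ G.edgeSet)
    (α : ℕ) (hα : α = Set.ncard {y : S | Φ y a = a ∧ Φ y (Φ x b) = Φ x b}) :
    ∑ j ∈ Finset.univ.filter
        (fun j : V => ∃ z : S, Sym2.map (Φ z) s(a, Φ x b) = s(a, j)),
        (p a - p j)
      = (α : ℝ)⁻¹ •
        ∑ y ∈ Finset.univ.filter (fun y : S => Φ y a = a),
          (y : Euc d ≃ₗᵢ[ℝ] Euc d) (p a - (x : Euc d ≃ₗᵢ[ℝ] Euc d) (p b)) := by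
  have hfix : ∀ y : S, Φ y a = a →
      (y : Euc d ≃ₗᵢ[ℝ] Euc d) (p a - (x : Euc d ≃ₗᵢ[ℝ] Euc d) (p b))
        = p a - p (Φ y (Φ x b)) := by
    intro y hy
    rw [map_sub, hsym x b, hsym, hsym, hy]
  have hset : ∀ j : V, (∃ z : S, Sym2.map (Φ z) s(a, Φ x b) = s(a, j)) ↔
      ∃ z : S, Φ z a = a ∧ Φ z (Φ x b) = j := by
    intro j
    refine exists_congr fun z => ?_
    rw [Sym2.map_mk, Sym2.eq_iff]
    constructor
    · rintro (h | ⟨_, h⟩)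
      · exact h
      · exfalso
        apply hdist (x⁻¹ * z⁻¹)
        rw [← h]
        simp
    · exact fun h => Or.inl h
  have hα0 : (α : ℝ) ≠ 0 := by
    have : 0 < α := by
      rw [hα, Set.ncard_pos (Set.toFinite _)]
      exact ⟨1, by simp⟩
    exact_mod_cast this.ne'
  rw [eq_inv_smul_iff₀ hα0, Finset.smul_sum]
  rw [Finset.sum_congr rfl (fun y hy => hfix y (Finset.mem_filter.1 hy).2)]
  rw [← Finset.sum_fiberwise_of_maps_to
    (t := Finset.univ.filter
        (fun j : V => ∃ z : S, Sym2.map (Φ z) s(a, Φ x b) = s(a, j)))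
    (g := fun y : S => Φ y (Φ x b))]
  · refine Finset.sum_congr rfl fun j hj => ?_
    obtain ⟨z, hza, hzj⟩ := (hset j).1 (Finset.mem_filter.1 hj).2
    rw [Finset.sum_congr rfl (g := fun _ => p a - p j)
      (fun y hy => by rw [(Finset.mem_filter.1 hy).2])]
    rw [Finset.sum_const, ← Nat.cast_smul_eq_nsmul ℝ]
    congr 2
    rw [hα, Set.ncard_eq_toFinset_card']
    have hzi : ∀ u v : V, Φ z u = v → Φ z⁻¹ v = u := by
      intro u v h
      rw [← h]; simp
    refine Finset.card_bij' (fun y _ => z * y) (fun y _ => z⁻¹ * y) ?_ ?_ ?_ ?_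
    · intro y hy
      simp only [Set.mem_toFinset, Set.mem_setOf_eq] at hy
      simp only [Finset.mem_filter, Finset.mem_univ, true_and, map_mul, Equiv.Perm.mul_apply]
      rw [hy.1, hy.2]
      exact ⟨hza, hzj⟩
    · intro y hy
      simp only [Finset.mem_filter, Finset.mem_univ, true_and] at hy
      simp only [Set.mem_toFinset, Set.mem_setOf_eq]
      rw [map_mul, Equiv.Perm.mul_apply, Equiv.Perm.mul_apply, hy.1, hy.2]
      exact ⟨hzi _ _ hza, hzi _ _ hzj⟩
    · intro y _; simp
    · intro y _; simp
  · intro y hy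
    exact Finset.mem_filter.2 ⟨Finset.mem_univ _, (hset _).2 ⟨y, (Finset.mem_filter.1 hy).2, rfl⟩⟩
end
end

section
/- (Lemma 7.2, orbit summation identity for an edge with both endpoints in one vertex orbit.) Let S be a finite subgroup of O(d), Φ : S → Aut(G) a homomorphism, and (G,p) an S-symmetric framework of type Φ in ℝ^d. Let a ∈ V, x ∈ S with Φ(x)(a) ≠ a, and suppose e = {a, Φ(x)(a)} ∈ E. Set β = |{y ∈ S : Φ(y)(a) = a and Φ(y)(Φ(x)(a)) = Φ(x)(a)}| and let S(e) = {Φ(z)(e) : z ∈ S}. Then there exists α ∈ {β, 2β} — namely α = 2β when some y ∈ S with Φ(y)(a) = a satisfies Φ(y)(Φ(x)(a)) = Φ(x⁻¹)(a), and α = β otherwise — such that Σ_{j ∈ V with {a,j} ∈ S(e)} (p_a − p_j) = (1/α) Σ_{y ∈ S with Φ(y)(a) = a} y(2p_a − x(p_a) − x⁻¹(p_a)). -/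
open scoped Classical

noncomputable section

theorem orbit_sum_aux {M V E : Type*} [Group M] [Fintype M] [DecidableEq V]
    [AddCommGroup E] [Module ℝ E] (Φ : M →* Equiv.Perm V) (a b : V) (f : V → E) :
    ∑ y ∈ Finset.univ.filter (fun y : M => Φ y a = a), f (Φ y b)
      = ((Finset.univ.filter (fun y : M => Φ y a = a ∧ Φ y b = b)).card : ℝ) •
        ∑ j ∈ (Finset.univ.filter (fun y : M => Φ y a = a)).image (fun y => Φ y b), f j := by
  rw [Finset.sum_comp f (fun y : M => Φ y b), Finset.smul_sum]
  refine Finset.sum_congr rfl fun j hj => ?_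
  obtain ⟨w, hw, rfl⟩ := Finset.mem_image.1 hj
  have hw' : Φ w a = a := by simpa using hw
  have hwi : (Φ w).symm a = a := by rw [Equiv.symm_apply_eq, hw']
  rw [Nat.cast_smul_eq_nsmul]
  congr 1
  refine Finset.card_nbij' (fun y => w⁻¹ * y) (fun y => w * y) ?_ ?_ ?_ ?_
  · intro y hy
    simp only [Finset.coe_filter, Finset.mem_filter, Finset.mem_univ, true_and,
      Set.mem_ofPred_eq] at hy ⊢
    simp [hy.1, hy.2, hwi, Equiv.Perm.inv_def]
  · intro y hy
    simp only [Finset.coe_filter, Finset.mem_filter, Finset.mem_univ, true_and,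
      Set.mem_ofPred_eq] at hy ⊢
    simp [hy.1, hy.2, hw']
  · intro y _; simp
  · intro y _; simp

/-- Lemma 7.2, orbit summation identity for an edge with both
endpoints in one vertex orbit: `α = 2β` if some `y` fixing `a` maps
`Φ(x)(a)` to `Φ(x⁻¹)(a)`, and `α = β` otherwise. -/
theorem stmt_14 {d : ℕ} {V : Type*} [Fintype V] [DecidableEq V]
    (G : SimpleGraph V)
    (S : Subgroup (Euc d ≃ₗᵢ[ℝ] Euc d)) [Fintype S]
    (Φ : S →* Equiv.Perm V)
    (hΦadj : ∀ (x : S) (i j : V), G.Adj (Φ x i) (Φ x j) ↔ G.Adj i j)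
    (p : V → Euc d) (hp : Function.Injective p)
    (hsym : ∀ (x : S) (i : V), (x : Euc d ≃ₗᵢ[ℝ] Euc d) (p i) = p (Φ x i))
    (a : V) (x : S) (hxa : Φ x a ≠ a)
    (he : s(a, Φ x a) ∈ G.edgeSet)
    (β : ℕ) (hβ : β = Set.ncard {y : S | Φ y a = a ∧ Φ y (Φ x a) = Φ x a}) :
    ∃ α : ℕ,
      ((∃ y : S, Φ y a = a ∧ Φ y (Φ x a) = Φ x⁻¹ a) → α = 2 * β) ∧
      (¬ (∃ y : S, Φ y a = a ∧ Φ y (Φ x a) = Φ x⁻¹ a) → α = β) ∧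
      ∑ j ∈ Finset.univ.filter
          (fun j : V => ∃ z : S, Sym2.map (Φ z) s(a, Φ x a) = s(a, j)),
          (p a - p j)
        = (α : ℝ)⁻¹ •
          ∑ y ∈ Finset.univ.filter (fun y : S => Φ y a = a),
            (y : Euc d ≃ₗᵢ[ℝ] Euc d)
              ((2 : ℝ) • p a - (x : Euc d ≃ₗᵢ[ℝ] Euc d) (p a)
                - ((x⁻¹ : S) : Euc d ≃ₗᵢ[ℝ] Euc d) (p a)) := by
  classical
  have hinv : ∀ (z : S) (i j : V), Φ z⁻¹ i = j ↔ i = Φ z j := by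
    intro z i j
    rw [map_inv, Equiv.Perm.inv_def, Equiv.symm_apply_eq]
  set H := Finset.univ.filter (fun y : S => Φ y a = a) with hH
  have memH : ∀ y : S, y ∈ H ↔ Φ y a = a := by intro y; simp [hH]
  set A := H.image (fun y => Φ y (Φ x a)) with hA
  set B := H.image (fun y => Φ y (Φ x⁻¹ a)) with hB
  have memA : ∀ j, j ∈ A ↔ ∃ y : S, Φ y a = a ∧ Φ y (Φ x a) = j := by
    intro j; simp only [hA, Finset.mem_image, memH]
  have memB : ∀ j, j ∈ B ↔ ∃ y : S, Φ y a = a ∧ Φ y (Φ x⁻¹ a) = j := by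
    intro j; simp only [hB, Finset.mem_image, memH]
  have hJ : Finset.univ.filter
      (fun j : V => ∃ z : S, Sym2.map (Φ z) s(a, Φ x a) = s(a, j)) = A ∪ B := by
    ext j
    simp only [Finset.mem_filter, Finset.mem_univ, true_and, Finset.mem_union, memA, memB,
      Sym2.map_mk, Sym2.eq_iff]
    constructor
    · rintro ⟨z, h | h⟩
      · exact Or.inl ⟨z, h⟩
      · refine Or.inr ⟨z * x, by simpa using h.2, ?_⟩
        rw [← h.1]; simp
    · rintro (⟨z, h⟩ | ⟨z, h1, h2⟩)
      · exact ⟨z, Or.inl h⟩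
      · refine ⟨z * x⁻¹, Or.inr ⟨by simpa using h2, ?_⟩⟩
        simpa using h1
  have hβ1 : (Finset.univ.filter (fun y : S => Φ y a = a ∧ Φ y (Φ x a) = Φ x a)).card = β := by
    rw [hβ, ← Set.ncard_coe_finset]; congr 1; ext y; simp
  have hβ2 : (Finset.univ.filter
      (fun y : S => Φ y a = a ∧ Φ y (Φ x⁻¹ a) = Φ x⁻¹ a)).card = β := by
    rw [← hβ1]
    refine Finset.card_nbij' (fun y => x * y * x⁻¹) (fun y => x⁻¹ * y * x) ?_ ?_ ?_ ?_
    · intro y hy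
      simp only [Finset.coe_filter, Finset.mem_univ, true_and, Set.mem_ofPred_eq] at hy ⊢
      refine ⟨?_, ?_⟩
      · rw [map_mul, map_mul, Equiv.Perm.mul_apply, Equiv.Perm.mul_apply, hy.2]; simp
      · rw [← Equiv.Perm.mul_apply, ← map_mul, inv_mul_cancel_right, map_mul,
          Equiv.Perm.mul_apply, hy.1]
    · intro y hy
      simp only [Finset.coe_filter, Finset.mem_univ, true_and, Set.mem_ofPred_eq] at hy ⊢
      refine ⟨?_, ?_⟩
      · rw [map_mul, map_mul, Equiv.Perm.mul_apply, Equiv.Perm.mul_apply, hy.2]; simp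
      · rw [← Equiv.Perm.mul_apply, ← map_mul, mul_inv_cancel_right, map_mul,
          Equiv.Perm.mul_apply, hy.1]
    · intro y _; simp [mul_assoc]
    · intro y _; simp [mul_assoc]
  have hβ0 : (β : ℝ) ≠ 0 := by
    rw [← hβ1]
    have : (1 : S) ∈ Finset.univ.filter (fun y : S => Φ y a = a ∧ Φ y (Φ x a) = Φ x a) := by simp
    exact_mod_cast (Finset.card_pos.2 ⟨_, this⟩).ne'
  have hR : ∑ y ∈ H, (y : Euc d ≃ₗᵢ[ℝ] Euc d)
              ((2 : ℝ) • p a - (x : Euc d ≃ₗᵢ[ℝ] Euc d) (p a)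
                - ((x⁻¹ : S) : Euc d ≃ₗᵢ[ℝ] Euc d) (p a))
      = (β : ℝ) • ∑ j ∈ A, (p a - p j) + (β : ℝ) • ∑ j ∈ B, (p a - p j) := by
    have h1 := orbit_sum_aux Φ a (Φ x a) (fun j => p a - p j)
    have h2 := orbit_sum_aux Φ a (Φ x⁻¹ a) (fun j => p a - p j)
    rw [hβ1] at h1
    rw [hβ2] at h2
    rw [← h1, ← h2, ← Finset.sum_add_distrib]
    refine Finset.sum_congr rfl fun y hy => ?_
    rw [map_sub, map_sub, map_smul, hsym x, hsym x⁻¹, hsym y, hsym y, hsym y, (memH y).1 hy,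
      two_smul]
    abel
  have key : ∀ y : S, Φ y a = a → Φ y⁻¹ a = a := fun y h => (hinv _ _ _).2 h.symm
  rw [hJ, hR]
  by_cases h : ∃ y : S, Φ y a = a ∧ Φ y (Φ x a) = Φ x⁻¹ a
  · refine ⟨2 * β, fun _ => rfl, fun h' => absurd h h', ?_⟩
    have hAB : A = B := by
      obtain ⟨w, hw1, hw2⟩ := h
      ext j
      rw [memA, memB]
      constructor
      · rintro ⟨y, h1, h2⟩
        refine ⟨y * w⁻¹, by rw [map_mul, Equiv.Perm.mul_apply, key w hw1, h1], ?_⟩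
        rw [map_mul, Equiv.Perm.mul_apply, (hinv _ _ _).2 hw2.symm, h2]
      · rintro ⟨y, h1, h2⟩
        refine ⟨y * w, by rw [map_mul, Equiv.Perm.mul_apply, hw1, h1], ?_⟩
        rw [map_mul, Equiv.Perm.mul_apply, hw2, h2]
    rw [← hAB, Finset.union_self, ← two_smul ℝ, smul_smul, smul_smul]
    push_cast
    rw [mul_assoc, inv_mul_cancel₀ (mul_ne_zero two_ne_zero hβ0), one_smul]
  · refine ⟨β, fun h' => absurd h' h, fun _ => rfl, ?_⟩
    have hd : Disjoint A B := by
      rw [Finset.disjoint_left]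
      intro j hjA hjB
      obtain ⟨y, h1, h2⟩ := (memA j).1 hjA
      obtain ⟨w, h3, h4⟩ := (memB j).1 hjB
      refine h ⟨w⁻¹ * y, by rw [map_mul, Equiv.Perm.mul_apply, h1, key w h3], ?_⟩
      rw [map_mul, Equiv.Perm.mul_apply, h2, (hinv _ _ _).2 h4.symm]
    rw [Finset.sum_union hd, ← smul_add, smul_smul, inv_mul_cancel₀ hβ0, one_smul]
end
end

section
/- (Theorem 7.3, cokernel of the orbit rigidity matrix.) Let (G,p) be an S-symmetric framework of type Φ in ℝ^d and let ω : E → ℝ be fully (S,Φ)-symmetric. Let V₀ ⊆ V be a set of vertices containing at least one vertex from every vertex orbit of the S-action on V. Then ω is a self-stress of (G,p) if and only if for every i ∈ V₀ the equilibrium equation Σ_{j : {i,j} ∈ E} ω({i,j})(p_i − p_j) = 0 holds. -/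
open scoped Classical

noncomputable section

/-- Theorem 7.3, cokernel of the orbit rigidity matrix: a fully
(S,Φ)-symmetric `ω` is a self-stress iff the equilibrium equation holds at a
set `V₀` of representatives of the vertex orbits. -/
theorem stmt_15 {d : ℕ} {V : Type*} [Fintype V] [DecidableEq V]
    (G : SimpleGraph V) [DecidableRel G.Adj]
    (S : Subgroup (Euc d ≃ₗᵢ[ℝ] Euc d))
    (Φ : S →* Equiv.Perm V)
    (hΦadj : ∀ (x : S) (i j : V), G.Adj (Φ x i) (Φ x j) ↔ G.Adj i j)
    (p : V → Euc d) (hp : Function.Injective p)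
    (hsym : ∀ (x : S) (i : V), (x : Euc d ≃ₗᵢ[ℝ] Euc d) (p i) = p (Φ x i))
    (ω : Sym2 V → ℝ)
    (hω : ∀ (x : S), ∀ e ∈ G.edgeSet, ω (Sym2.map (Φ x) e) = ω e)
    (V₀ : Set V) (hcover : ∀ i : V, ∃ j ∈ V₀, ∃ x : S, Φ x j = i) :
    (∀ i : V, ∑ j ∈ G.neighborFinset i, ω s(i, j) • (p i - p j) = 0) ↔
      (∀ i ∈ V₀, ∑ j ∈ G.neighborFinset i, ω s(i, j) • (p i - p j) = 0) := by
  refine ⟨fun h i _ => h i, fun h i => ?_⟩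
  obtain ⟨j, hj, x, rfl⟩ := hcover i
  have h1 := congrArg (x : Euc d ≃ₗᵢ[ℝ] Euc d) (h j hj)
  rw [map_sum, map_zero] at h1
  rw [← h1]
  symm
  refine Finset.sum_equiv (Φ x) ?_ ?_
  · intro k
    simp only [SimpleGraph.mem_neighborFinset, hΦadj]
  · intro k hk
    rw [SimpleGraph.mem_neighborFinset] at hk
    have h2 := hω x s(j, k) hk
    rw [Sym2.map_mk] at h2
    rw [map_smul, map_sub, hsym, hsym, ← h2]
end
end

section
/- (Dimension of the fully symmetric trivial motions for half-turn symmetry, Section 6.1.3.) Let d ≥ 2, let C ∈ O(d) be an orthogonal involution of ℝ^d whose fixed subspace has dimension d − 2 (a half-turn), S = {I, C}, and Φ : S → Aut(G) a homomorphism. Let (G,p) be an S-symmetric framework of type Φ in ℝ^d whose points p_i affinely span ℝ^d. Then the set of fully (S,Φ)-symmetric infinitesimal rigid motions of (G,p) — that is, maps u : V → ℝ^d of the form u_i = A p_i + t with A a skew-symmetric d×d matrix and t ∈ ℝ^d, satisfying x(u_i) = u_{Φ(x)(i)} for all i ∈ V, x ∈ S — is a linear subspace of (ℝ^d)^V of dimension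 1 + (d−1)(d−2)/2. -/
open scoped Classical

noncomputable section

open Module in
theorem aux_basis {d n : ℕ} (hn : d = n + 2) (C : Euc d ≃ₗᵢ[ℝ] Euc d) (hC2 : ∀ v, C (C v) = v)
    (hhalf : finrank ℝ (fixedSpace C) = n) :
    ∃ b : OrthonormalBasis (Fin 2 ⊕ Fin n) ℝ (Euc d),
      (∀ i, C (b (Sum.inl i)) = - b (Sum.inl i)) ∧ (∀ i, C (b (Sum.inr i)) = b (Sum.inr i)) := by
  have hmem : ∀ v, v ∈ fixedSpace C ↔ C v = v := by
    intro v
    simp [fixedSpace, LinearMap.mem_ker, sub_eq_zero]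
  have hperp : finrank ℝ (fixedSpace C)ᗮ = 2 := by
    have := Submodule.finrank_add_finrank_orthogonal (fixedSpace C)
    rw [hhalf, finrank_euclideanSpace_fin] at this
    omega
  have hneg : ∀ x ∈ (fixedSpace C)ᗮ, C x = -x := by
    intro x hx
    have h1 : x + C x ∈ fixedSpace C := by
      rw [hmem, map_add, hC2, add_comm]
    have h2 : C x ∈ (fixedSpace C)ᗮ := by
      rw [Submodule.mem_orthogonal] at hx ⊢
      intro u hu
      have := hx u hu
      rw [← (hmem u).1 hu, C.inner_map_map]
      exact this
    have h3 : x + C x ∈ (fixedSpace C)ᗮ := Submodule.add_mem _ hx h2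
    have h4 : x + C x = 0 := by
      have := (Submodule.mem_orthogonal _ _).1 h3 _ h1
      exact inner_self_eq_zero.1 this
    exact (neg_eq_of_add_eq_zero_right h4).symm
  let f := (stdOrthonormalBasis ℝ (fixedSpace C)).reindex (finCongr hhalf)
  let g := (stdOrthonormalBasis ℝ ((fixedSpace C)ᗮ : Submodule ℝ (Euc d))).reindex (finCongr hperp)
  let w : Fin 2 ⊕ Fin n → Euc d := Sum.elim (fun i => (g i : Euc d)) (fun i => (f i : Euc d))
  have how : Orthonormal ℝ w := by
    rw [orthonormal_iff_ite]
    have hf := orthonormal_iff_ite.1 f.orthonormal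
    have hg := orthonormal_iff_ite.1 g.orthonormal
    rintro (i | i) (j | j)
    · have := hg i j
      simpa [w] using this
    · have := (Submodule.mem_orthogonal _ _).1 (g i).2 _ (f j).2
      rw [real_inner_comm] at this
      simpa [w] using this
    · have := (Submodule.mem_orthogonal _ _).1 (g j).2 _ (f i).2
      simpa [w] using this
    · have := hf i j
      simpa [w] using this
  have hsp : Submodule.span ℝ (Set.range w) = ⊤ := by
    apply how.linearIndependent.span_eq_top_of_card_eq_finrank'
    simp; omega
  refine ⟨OrthonormalBasis.mk how hsp.ge, ?_, ?_⟩
  · intro i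
    rw [OrthonormalBasis.coe_mk]
    exact hneg _ (g i).2
  · intro i
    rw [OrthonormalBasis.coe_mk]
    exact (hmem _).1 (f i).2

/-- pairs (A,t) commuting with C, A skew -/
def pairSpace {d : ℕ} (C : Euc d ≃ₗᵢ[ℝ] Euc d) : Submodule ℝ ((Euc d →ₗ[ℝ] Euc d) × Euc d) where
  carrier := {q | star q.1 = -q.1 ∧ (∀ v, q.1 (C v) = C (q.1 v)) ∧ C q.2 = q.2}
  add_mem' := by
    rintro ⟨A, t⟩ ⟨B, s⟩ ⟨h1, h2, h3⟩ ⟨k1, k2, k3⟩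
    simp only at h1 h2 h3 k1 k2 k3
    refine ⟨?_, ?_, ?_⟩
    · simp only [Prod.mk_add_mk, star_add, h1, k1]; abel
    · intro v; simp [h2, k2]
    · simp [h3, k3]
  zero_mem' := by simp
  smul_mem' := by
    rintro c ⟨A, t⟩ ⟨h1, h2, h3⟩
    simp only at h1 h2 h3
    refine ⟨?_, ?_, ?_⟩
    · simp [star_smul, h1]
    · intro v; simp [h2]
    · simp [h3]

/-- coordinates -/
def coords {d n : ℕ} (b : OrthonormalBasis (Fin 2 ⊕ Fin n) ℝ (Euc d)) :
    ((Euc d →ₗ[ℝ] Euc d) × Euc d) →ₗ[ℝ]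
      ℝ × ({q : Fin n × Fin n // q.1 < q.2} → ℝ) × (Fin n → ℝ) where
  toFun q := (LinearMap.toMatrixOrthonormal b q.1 (Sum.inl 0) (Sum.inl 1),
    fun r => LinearMap.toMatrixOrthonormal b q.1 (Sum.inr r.1.1) (Sum.inr r.1.2),
    fun j => inner ℝ (b (Sum.inr j)) q.2)
  map_add' q r := by
    ext <;> simp [inner_add_right]
  map_smul' c q := by
    ext <;> simp [inner_smul_right]

/-- the skew matrix with given coordinates -/
def skewMat {n : ℕ} (a : ℝ) (s : {q : Fin n × Fin n // q.1 < q.2} → ℝ) :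
    Matrix (Fin 2 ⊕ Fin n) (Fin 2 ⊕ Fin n) ℝ :=
  Matrix.fromBlocks !![0, a; -a, 0] 0 0
    (Matrix.of fun i j => if h : i < j then s ⟨(i, j), h⟩ else
      if h : j < i then -s ⟨(j, i), h⟩ else 0)

theorem skewMat_star {n : ℕ} (a : ℝ) (s : {q : Fin n × Fin n // q.1 < q.2} → ℝ) :
    star (skewMat a s) = - skewMat a s := by
  ext i j
  rw [Matrix.star_apply]
  rcases i with i | i <;> rcases j with j | j
  · fin_cases i <;> fin_cases j <;> simp [skewMat]
  · simp [skewMat]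
  · simp [skewMat]
  · rcases lt_trichotomy i j with h | h | h
    · simp [skewMat, h, h.not_gt]
    · subst h; simp [skewMat]
    · simp [skewMat, h, h.not_gt]

open Module in
theorem finrank_pairSpace {d n : ℕ} (C : Euc d ≃ₗᵢ[ℝ] Euc d) (hC2 : ∀ v, C (C v) = v)
    (b : OrthonormalBasis (Fin 2 ⊕ Fin n) ℝ (Euc d))
    (hl : ∀ i, C (b (Sum.inl i)) = - b (Sum.inl i)) (hr : ∀ i, C (b (Sum.inr i)) = b (Sum.inr i)) :
    finrank ℝ (pairSpace C) = 1 + (n.choose 2 + n) := by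
  have hbij : Function.Bijective ((coords b).domRestrict (pairSpace C)) := by
    constructor
    · rw [← LinearMap.ker_eq_bot, LinearMap.ker_eq_bot']
      rintro ⟨⟨A, t⟩, h1, h2, h3⟩ h0
      simp only at h1 h2 h3
      have h0' : coords b (A, t) = 0 := h0
      simp only [coords, LinearMap.coe_mk, AddHom.coe_mk, Prod.mk_eq_zero, funext_iff,
        Pi.zero_apply] at h0'
      obtain ⟨e1, e2, e3⟩ := h0'
      have hsk : ∀ i j, LinearMap.toMatrixOrthonormal b A j i =
          - LinearMap.toMatrixOrthonormal b A i j := by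
        intro i j
        have := congrArg (LinearMap.toMatrixOrthonormal b) h1
        rw [map_star, map_neg] at this
        have := congrFun (congrFun this i) j
        simpa [Matrix.star_apply] using this
      have hmix : ∀ i j, LinearMap.toMatrixOrthonormal b A (Sum.inl i) (Sum.inr j) = 0 := by
        intro i j
        rw [LinearMap.toMatrixOrthonormal_apply_apply]
        have h := C.inner_map_map (b (Sum.inl i)) (A (b (Sum.inr j)))
        rw [← h2, hr, hl, inner_neg_left] at h
        linarith
      have hA : A = 0 := by
        apply EquivLike.injective (LinearMap.toMatrixOrthonormal b)
        rw [map_zero]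
        ext i j
        rw [Matrix.zero_apply]
        rcases i with i | i <;> rcases j with j | j
        · have s0 := hsk (Sum.inl 0) (Sum.inl 0)
          have s1 := hsk (Sum.inl 1) (Sum.inl 1)
          have s2 := hsk (Sum.inl 0) (Sum.inl 1)
          fin_cases i <;> fin_cases j <;> simp only [Fin.zero_eta, Fin.mk_one] <;> linarith
        · exact hmix i j
        · rw [hsk, hmix, neg_zero]
        · rcases lt_trichotomy i j with h | h | h
          · exact e2 ⟨(i, j), h⟩
          · subst h
            have := hsk (Sum.inr i) (Sum.inr i)
            linarith
          · rw [hsk, e2 ⟨(j, i), h⟩, neg_zero]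
      have ht : t = 0 := by
        apply b.repr.injective
        ext i
        rw [b.repr_apply_apply, map_zero]
        rcases i with i | i
        · have h := C.inner_map_map (b (Sum.inl i)) t
          rw [h3, hl, inner_neg_left] at h
          simp; linarith
        · exact e3 i
      subst hA ht
      rfl
    · rintro ⟨a, s, t⟩
      let A := (LinearMap.toMatrixOrthonormal b).symm (skewMat a s)
      have hAM : LinearMap.toMatrixOrthonormal b A = skewMat a s :=
        (LinearMap.toMatrixOrthonormal b).apply_symm_apply _
      refine ⟨⟨(A, ∑ j, t j • b (Sum.inr j)), ?_, ?_, ?_⟩, ?_⟩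
      · apply EquivLike.injective (LinearMap.toMatrixOrthonormal b)
        rw [map_star, map_neg, hAM, skewMat_star]
      · have : A ∘ₗ C.toLinearEquiv.toLinearMap = C.toLinearEquiv.toLinearMap ∘ₗ A := by
          apply EquivLike.injective (LinearMap.toMatrixOrthonormal b)
          ext i j
          rw [LinearMap.toMatrixOrthonormal_apply_apply, LinearMap.toMatrixOrthonormal_apply_apply]
          have hA' : ∀ i j, inner ℝ (b i) (A (b j)) = skewMat a s i j := by
            intro i j
            rw [← hAM, LinearMap.toMatrixOrthonormal_apply_apply]
          have hCs : ∀ x y, inner ℝ x (C y) = inner ℝ (C x) y := by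
            intro x y
            rw [← C.inner_map_map, hC2]
          change inner ℝ (b i) (A (C (b j))) = inner ℝ (b i) (C (A (b j)))
          rw [hCs]
          rcases i with i | i <;> rcases j with j | j <;>
            simp only [hl, hr, map_neg, inner_neg_left, inner_neg_right, hA'] <;> simp [skewMat]
        intro v
        exact LinearMap.congr_fun this v
      · simp [map_sum, hr]
      · change coords b (A, _) = _
        simp only [coords, LinearMap.coe_mk, AddHom.coe_mk, hAM]
        refine Prod.ext ?_ (Prod.ext ?_ ?_)
        · simp [skewMat]
        · funext r
          simp [skewMat, r.2]
        · funext j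
          simp [inner_sum, inner_smul_right, orthonormal_iff_ite.1 b.orthonormal]
  rw [(LinearEquiv.ofBijective _ hbij).finrank_eq]
  have hc := Fintype.card_product_filter_lt (α := Fin n)
  rw [Fintype.card_fin] at hc
  simp only [finrank_prod, finrank_self, finrank_fintype_fun_eq_card, Fintype.card_fin, Fintype.card_subtype]
  rw [← hc]

theorem aux_affine {d : ℕ} {V : Type*} (p : V → Euc d)
    (hspan : affineSpan ℝ (Set.range p) = ⊤) (A B : Euc d →ₗ[ℝ] Euc d) (s t : Euc d)
    (h : ∀ i, A (p i) + s = B (p i) + t) : A = B ∧ s = t := by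
  have key : A.toAffineMap + AffineMap.const ℝ (Euc d) s =
      B.toAffineMap + AffineMap.const ℝ (Euc d) t := by
    apply AffineMap.ext_on hspan
    rintro _ ⟨i, rfl⟩
    simpa using h i
  have hv : ∀ v, A v + s = B v + t := fun v => by
    simpa using congrArg (fun f => f v) key
  have hst : s = t := by simpa using hv 0
  refine ⟨?_, hst⟩
  ext1 v
  have := hv v
  rw [hst] at this
  exact add_right_cancel this

/-- the motion map -/
def motion {d : ℕ} {V : Type*} (p : V → Euc d) :
    ((Euc d →ₗ[ℝ] Euc d) × Euc d) →ₗ[ℝ] (V → Euc d) where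
  toFun q := fun i => q.1 (p i) + q.2
  map_add' q r := by ext1 i; simp; abel
  map_smul' c q := by ext1 i; simp

theorem skew_iff {d : ℕ} (A : Matrix (Fin d) (Fin d) ℝ) :
    Matrix.transpose A = -A ↔ star (Matrix.toEuclideanLin A) = - Matrix.toEuclideanLin A := by
  rw [LinearMap.star_eq_adjoint, ← Matrix.toEuclideanLin_conjTranspose_eq_adjoint, ← map_neg,
    EmbeddingLike.apply_eq_iff_eq, Matrix.conjTranspose_eq_transpose_of_trivial]

/-- dimension of the fully symmetric trivial motions for
half-turn symmetry, Section 6.1.3: for `S = {I, C}` with `C` an orthogonal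
involution of `ℝ^d` whose fixed subspace has dimension `d - 2`, the fully
(S,Φ)-symmetric infinitesimal rigid motions of a framework whose points
affinely span `ℝ^d` form a linear subspace of `(ℝ^d)^V` of dimension
`1 + (d-1)(d-2)/2`. -/
theorem stmt_19 {d : ℕ} (hd : 2 ≤ d) {V : Type*} [Fintype V] [DecidableEq V]
    (G : SimpleGraph V)
    (C : Euc d ≃ₗᵢ[ℝ] Euc d) (hC2 : ∀ v, C (C v) = v)
    (hhalf : Module.finrank ℝ (fixedSpace C) = d - 2)
    (σ : Equiv.Perm V) (hσ2 : σ * σ = 1)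
    (hσadj : ∀ i j : V, G.Adj (σ i) (σ j) ↔ G.Adj i j)
    (p : V → Euc d) (hp : Function.Injective p)
    (hsym : ∀ i, C (p i) = p (σ i))
    (hspan : affineSpan ℝ (Set.range p) = ⊤) :
    ∃ W : Submodule ℝ (V → Euc d),
      (W : Set (V → Euc d)) = {u : V → Euc d |
        (∀ i, C (u i) = u (σ i)) ∧
        ∃ A : Matrix (Fin d) (Fin d) ℝ, Matrix.transpose A = -A ∧
          ∃ t : Euc d, ∀ i, u i = Matrix.toEuclideanLin A (p i) + t} ∧
      Module.finrank ℝ W = 1 + (d - 1) * (d - 2) / 2 := by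
  obtain ⟨n, rfl⟩ : ∃ n, d = n + 2 := ⟨d - 2, by omega⟩
  obtain ⟨b, hl, hr⟩ := aux_basis rfl C hC2 (by simpa using hhalf)
  have hinj : Function.Injective (motion p) := by
    rintro ⟨A, s⟩ ⟨B, t⟩ h
    obtain ⟨h1, h2⟩ := aux_affine p hspan A B s t (fun i => congrFun h i)
    rw [h1, h2]
  refine ⟨(pairSpace C).map (motion p), ?_, ?_⟩
  · ext u
    simp only [SetLike.mem_coe, Submodule.mem_map, Set.mem_setOf_eq]
    constructor
    · rintro ⟨⟨A, t⟩, ⟨h1, h2, h3⟩, rfl⟩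
      simp only at h1 h2 h3
      refine ⟨?_, Matrix.toEuclideanLin.symm A, ?_, t, ?_⟩
      · intro i
        change C (A (p i) + t) = A (p (σ i)) + t
        rw [map_add, h3, ← h2, hsym]
      · rw [skew_iff, LinearEquiv.apply_symm_apply, h1]
      · intro i
        rw [LinearEquiv.apply_symm_apply]
        rfl
    · rintro ⟨hu, A, hA, t, hAt⟩
      have h := aux_affine p hspan (C.toLinearEquiv.toLinearMap ∘ₗ Matrix.toEuclideanLin A)
        (Matrix.toEuclideanLin A ∘ₗ C.toLinearEquiv.toLinearMap) (C t) t (by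
          intro i
          change C (Matrix.toEuclideanLin A (p i)) + C t = Matrix.toEuclideanLin A (C (p i)) + t
          rw [← map_add, ← hAt, hu, hAt, hsym])
      refine ⟨(Matrix.toEuclideanLin A, t), ⟨(skew_iff A).1 hA, ?_, h.2⟩, ?_⟩
      · intro v
        exact (LinearMap.congr_fun h.1 v).symm
      · funext i
        exact (hAt i).symm
  · rw [← (Submodule.equivMapOfInjective (motion p) hinj (pairSpace C)).finrank_eq, finrank_pairSpace C hC2 b hl hr]
    have : (n + 2 - 1) * (n + 2 - 2) / 2 = (n + 1).choose 2 := by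
      rw [Nat.choose_two_right]; simp
    rw [this, Nat.choose_succ_succ' n 1, Nat.choose_one_right, add_comm n]
end
end
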